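/- For every finite nontrivial group G there exists a finite simple graph 𝒢 such that every vertex of 𝒢 has degree at least 2, 𝒢 contains no clique of size greater than 2 (no triangles), and the automorphism group of 𝒢 is isomorphic to G. -/

import Mathlib

/-- The automorphism group of a simple graph, as the subgroup of permutations
of the vertex set preserving adjacency. -/
def graphAut {V : Type} (𝒢 : SimpleGraph V) : Subgroup (Equiv.Perm V) where
  carrier := {f | ∀ x y, 𝒢.Adj (f x) (f y) ↔ 𝒢.Adj x y}
  one_mem' := by simp
  mul_mem' := by
    intro f g hf hg x y
    simp only [Equiv.Perm.mul_apply]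
    rw [hf, hg]
  inv_mem' := by
    intro f hf x y
    have := (hf (f⁻¹ x) (f⁻¹ y)).symm
    simpa using this

/-! Every arrow `g → g * t` of the Cayley digraph of `G`, with all elements of `G` as generators,
becomes a vertex of colour `t`, joined to a source vertex for `g`, to a target vertex for `g * t`
and, for some linear order on the colours, to the label vertices of all colours `x ≥ t`. Each `g`
also has one arrow without target, of an additional top colour. This graph is bipartite, hence
triangle-free.

The label `⊤` is the only vertex of maximal degree, so an automorphism permutes its neighbours, the
arrows, and it preserves their colours because the degree of an arrow determines its colour.
Counting the neighbours of each colour then tells sources, targets and the individual labels apart,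
and a permutation of `G` that respects all coloured arrows is a left translation. -/

theorem ncard_Ici_injective {α : Type*} [LinearOrder α] [Finite α] :
    Function.Injective fun a : α ↦ (Set.Ici a).ncard :=
  StrictAnti.injective fun _ _ h ↦ Set.ncard_strictMono (Set.Ici_ssubset_Ici.2 h)

theorem card_withTop (α : Type*) [Finite α] : Nat.card (WithTop α) = Nat.card α + 1 :=
  Finite.card_option

theorem ncard_le_of_isClique_of_colorable {V : Type*} {𝒢 : SimpleGraph V} {n : ℕ}
    (h𝒢 : 𝒢.Colorable n) {s : Set V} (hs : 𝒢.IsClique s) : s.ncard ≤ n := by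
  obtain hfin | hinf := s.finite_or_infinite
  · lift s to Finset V using hfin
    simpa only [Set.ncard_coe_finset] using hs.card_le_of_colorable h𝒢
  · simp only [hinf.ncard, zero_le]

section GraphIso

variable {V W : Type*} {𝒢 : SimpleGraph V} {ℋ : SimpleGraph W}

theorem ncard_neighborSet_inter_image (f : 𝒢 ≃g ℋ) (v : V) (S : Set V) :
    (ℋ.neighborSet (f v) ∩ f '' S).ncard = (𝒢.neighborSet v ∩ S).ncard := by
  rw [← f.image_neighborSet, ← Set.image_inter f.injective,
    Set.ncard_image_of_injective _ f.injective]

theorem ncard_neighborSet_apply (f : 𝒢 ≃g ℋ) (v : V) :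
    (ℋ.neighborSet (f v)).ncard = (𝒢.neighborSet v).ncard := by
  rw [← f.image_neighborSet, Set.ncard_image_of_injective _ f.injective]

end GraphIso

/-- The vertices of `fruchtGraph G`. For `t : G`, the vertex `arrow g t` stands for the arrow
`g → g * t` of the Cayley digraph of `G` with all elements of `G` as generators; `arrow g ⊤` is an
extra arrow leaving `g` that has no target. The vertices `label s` serve to tell the colours `s` of
the arrows apart. -/
inductive FruchtVertex (G : Type*)
  | arrow (g : G) (s : WithTop G)
  | source (g : G)
  | target (g : G)
  | label (s : WithTop G)

namespace FruchtVertex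

variable {G : Type*}

instance [Finite G] : Finite (FruchtVertex G) :=
  .of_surjective (Sum.elim (fun p : G × WithTop G ↦ arrow p.1 p.2)
    (Sum.elim source (Sum.elim target label))) fun v ↦ by cases v <;> simp

/-- Left translation of vertices; arrow colours are unaffected, since `u * g → u * (g * t)` is again
an arrow of colour `t`. -/
instance [Mul G] : SMul G (FruchtVertex G) where
  smul u
    | arrow g s => arrow (u * g) s
    | source g => source (u * g)
    | target g => target (u * g)
    | label s => label s

section Mul

variable [Mul G] (u g : G) (s : WithTop G)

@[simp] theorem smul_arrow : u • arrow g s = arrow (u * g) s := rfl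

@[simp] theorem smul_source : u • source g = source (u * g) := rfl

@[simp] theorem smul_target : u • target g = target (u * g) := rfl

@[simp] theorem smul_label : u • (label s : FruchtVertex G) = label s := rfl

end Mul

instance [Monoid G] : MulAction G (FruchtVertex G) where
  one_smul v := by cases v <;> simp
  mul_smul u v w := by cases w <;> simp [mul_assoc]

instance [RightCancelMonoid G] : FaithfulSMul G (FruchtVertex G) where
  eq_of_smul_eq_smul h := by simpa using h (source 1)

/-- Incidence of an arrow with its source, its target and the labels at or above its own colour.
The target of `arrow g t` is `g * t`; writing this as `t = g⁻¹ * h` excludes the colour `⊤`. The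
order on `G` is only used to number the colours and is unrelated to the multiplication. -/
def Incident [Group G] [LE G] : FruchtVertex G → FruchtVertex G → Prop
  | arrow g _, source h => g = h
  | arrow g s, target h => s = (g⁻¹ * h : G)
  | arrow _ s, label x => s ≤ x
  | _, _ => False

/-- The two-colouring of the vertices that shows `fruchtGraph G` to be bipartite. -/
def isArrow : FruchtVertex G → Bool
  | arrow _ _ => true
  | _ => false

/-- The set of arrows of colour `s`. -/
def layer (s : WithTop G) : Set (FruchtVertex G) :=
  Set.range (arrow · s)

end FruchtVertex

/-- The Frucht graph of `G`: the bipartite graph between the arrows of the Cayley digraph of `G` and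
their sources, targets and labels. -/
def fruchtGraph (G : Type*) [Group G] [LE G] : SimpleGraph (FruchtVertex G) where
  Adj v w := v.Incident w ∨ w.Incident v
  symm := ⟨fun _ _ ↦ Or.symm⟩
  loopless := ⟨fun v ↦ by cases v <;> simp [FruchtVertex.Incident]⟩

namespace fruchtGraph

open FruchtVertex

variable {G : Type*} [Group G]

section LE

variable [LE G]

@[simp] theorem adj_arrow_source {g h : G} {s : WithTop G} :
    (fruchtGraph G).Adj (arrow g s) (source h) ↔ g = h := by
  simp [fruchtGraph, Incident]

@[simp] theorem adj_arrow_target {g h : G} {s : WithTop G} :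
    (fruchtGraph G).Adj (arrow g s) (target h) ↔ s = (g⁻¹ * h : G) := by
  simp [fruchtGraph, Incident]

@[simp] theorem adj_arrow_label {g : G} {s x : WithTop G} :
    (fruchtGraph G).Adj (arrow g s) (label x) ↔ s ≤ x := by
  simp [fruchtGraph, Incident]

theorem isArrow_ne_of_adj {v w : FruchtVertex G} (h : (fruchtGraph G).Adj v w) :
    v.isArrow ≠ w.isArrow := by
  cases v <;> cases w <;> simp_all [fruchtGraph, Incident, isArrow]

theorem colorable_two : (fruchtGraph G).Colorable 2 :=
  (SimpleGraph.Coloring.mk isArrow isArrow_ne_of_adj).colorable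

theorem adj_smul_smul_iff (u : G) (v w : FruchtVertex G) :
    (fruchtGraph G).Adj (u • v) (u • w) ↔ (fruchtGraph G).Adj v w := by
  cases v <;> cases w <;> simp [fruchtGraph, Incident, mul_assoc]

theorem neighborSet_label_top :
    (fruchtGraph G).neighborSet (label ⊤) = Set.range fun p : G × WithTop G ↦ arrow p.1 p.2 := by
  ext w
  cases w <;> simp [fruchtGraph, Incident]

theorem ncard_neighborSet_label_top [Finite G] :
    ((fruchtGraph G).neighborSet (label ⊤)).ncard = Nat.card G * (Nat.card G + 1) := by
  rw [neighborSet_label_top, Set.ncard_range_of_injective, Nat.card_prod, card_withTop]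
  rintro ⟨g, s⟩ ⟨h, t⟩ hgh
  simpa using hgh

theorem neighborSet_subset_neighborSet_label_top {v : FruchtVertex G} (hv : v.isArrow = false) :
    (fruchtGraph G).neighborSet v ⊆ (fruchtGraph G).neighborSet (label ⊤) := by
  intro w hw
  have hne := isArrow_ne_of_adj hw
  cases w <;> simp_all [neighborSet_label_top, isArrow]

end LE

section Preorder

variable [Preorder G]

theorem two_le_ncard_neighborSet [Finite G] [Nontrivial G] (v : FruchtVertex G) :
    2 ≤ ((fruchtGraph G).neighborSet v).ncard := by
  obtain ⟨u, hu⟩ := exists_ne (1 : G)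
  refine (Set.one_lt_ncard).2 ?_
  cases v with
  | arrow g s =>
    exact ⟨source g, adj_arrow_source.2 rfl, label ⊤, adj_arrow_label.2 le_top, by simp⟩
  | source g =>
    exact ⟨arrow g ⊤, (adj_arrow_source.2 rfl).symm, arrow g (1 : G),
      (adj_arrow_source.2 rfl).symm, by simp⟩
  | target g =>
    exact ⟨arrow g (1 : G), (adj_arrow_target.2 (by simp)).symm, arrow (g * u⁻¹) u,
      (adj_arrow_target.2 (by simp)).symm, by simp [hu]⟩
  | label x =>
    exact ⟨arrow 1 x, (adj_arrow_label.2 le_rfl).symm, arrow u x,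
      (adj_arrow_label.2 le_rfl).symm, by simp [hu.symm]⟩

theorem neighborSet_arrow_coe (g t : G) :
    (fruchtGraph G).neighborSet (arrow g t) =
      insert (source g) (insert (target (g * t)) (label '' Set.Ici (t : WithTop G))) := by
  ext w
  cases w <;> simp [fruchtGraph, Incident, eq_comm, eq_inv_mul_iff_mul_eq]

theorem ncard_neighborSet_arrow_coe [Finite G] (g t : G) :
    ((fruchtGraph G).neighborSet (arrow g t)).ncard = (Set.Ici (t : WithTop G)).ncard + 2 := by
  rw [neighborSet_arrow_coe, Set.ncard_insert_of_notMem (by simp),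
    Set.ncard_insert_of_notMem (by simp),
    Set.ncard_image_of_injective _ fun _ _ ↦ label.inj]

end Preorder

section PartialOrder

variable [PartialOrder G]

theorem neighborSet_arrow_top (g : G) :
    (fruchtGraph G).neighborSet (arrow g ⊤) = {source g, label ⊤} := by
  ext w
  cases w <;> simp [fruchtGraph, Incident, eq_comm]

theorem ncard_neighborSet_arrow_top (g : G) :
    ((fruchtGraph G).neighborSet (arrow g ⊤)).ncard = 2 := by
  rw [neighborSet_arrow_top, Set.ncard_pair (by simp)]

theorem exists_not_adj_arrow_top [Nontrivial G] {v : FruchtVertex G} (hv : v ≠ label ⊤) :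
    ∃ g, ¬(fruchtGraph G).Adj v (arrow g ⊤) := by
  cases v with
  | source h =>
    obtain ⟨g, hg⟩ := exists_ne h
    exact ⟨g, fun hadj ↦ hg (adj_arrow_source.1 hadj.symm)⟩
  | label x => exact ⟨1, by simpa [fruchtGraph, Incident] using hv⟩
  | _ => exact ⟨1, by simp [fruchtGraph, Incident]⟩

variable [Finite G]

theorem ncard_neighborSet_arrow_le (g : G) (s : WithTop G) :
    ((fruchtGraph G).neighborSet (arrow g s)).ncard ≤ Nat.card G + 3 := by
  induction s with
  | top =>
    rw [ncard_neighborSet_arrow_top]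
    lia
  | coe t =>
    have hIci : (Set.Ici (t : WithTop G)).ncard ≤ Nat.card (WithTop G) := Set.ncard_le_card _
    rw [ncard_neighborSet_arrow_coe]
    rw [card_withTop] at hIci
    lia

theorem ncard_neighborSet_lt_label_top [Nontrivial G] {v : FruchtVertex G} (hv : v ≠ label ⊤) :
    ((fruchtGraph G).neighborSet v).ncard < ((fruchtGraph G).neighborSet (label ⊤)).ncard := by
  cases v with
  | arrow g s =>
    have hcard : 1 < Nat.card G := Finite.one_lt_card
    rw [ncard_neighborSet_label_top]
    calc ((fruchtGraph G).neighborSet (arrow g s)).ncard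
        ≤ Nat.card G + 3 := ncard_neighborSet_arrow_le g s
      _ < 2 * (Nat.card G + 1) := by lia
      _ ≤ Nat.card G * (Nat.card G + 1) := Nat.mul_le_mul_right _ hcard
  | _ =>
    obtain ⟨g, hg⟩ := exists_not_adj_arrow_top hv
    refine Set.ncard_lt_ncard ((Set.ssubset_iff_of_subset
      (neighborSet_subset_neighborSet_label_top rfl)).2 ⟨arrow g ⊤, ?_, hg⟩)
    exact (adj_arrow_label.2 le_top).symm

end PartialOrder

theorem eq_of_ncard_neighborSet_arrow_eq [LinearOrder G] [Finite G] {g h : G} {s t : WithTop G}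
    (hst : ((fruchtGraph G).neighborSet (arrow g s)).ncard =
      ((fruchtGraph G).neighborSet (arrow h t)).ncard) : s = t := by
  have hpos (a : WithTop G) : (Set.Ici a).ncard ≠ 0 := Set.ncard_ne_zero_of_mem Set.self_mem_Ici
  cases s <;> cases t <;>
    simp only [ncard_neighborSet_arrow_top, ncard_neighborSet_arrow_coe, Nat.add_right_cancel_iff,
      Nat.right_eq_add, Nat.add_eq_right, hpos] at hst ⊢
  exact ncard_Ici_injective hst

/-- The number of arrows of colour `s` adjacent to `v`. -/
noncomputable def layerDegree [LE G] (s : WithTop G) (v : FruchtVertex G) : ℕ :=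
  ((fruchtGraph G).neighborSet v ∩ layer s).ncard

section LayerDegree

variable [LE G]

theorem layerDegree_eq_ncard (s : WithTop G) (v : FruchtVertex G) :
    layerDegree s v = {g | (fruchtGraph G).Adj v (arrow g s)}.ncard := by
  have himage : (fruchtGraph G).neighborSet v ∩ layer s =
      (arrow · s) '' {g | (fruchtGraph G).Adj v (arrow g s)} := by
    rw [layer, ← Set.image_preimage_eq_inter_range]
    rfl
  rw [layerDegree, himage, Set.ncard_image_of_injective _ fun _ _ h ↦ (arrow.inj h).1]

@[simp] theorem layerDegree_arrow (s t : WithTop G) (g : G) : layerDegree s (arrow g t) = 0 := by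
  simp [layerDegree_eq_ncard, fruchtGraph, Incident]

@[simp] theorem layerDegree_source (s : WithTop G) (h : G) : layerDegree s (source h) = 1 := by
  simp [layerDegree_eq_ncard, fruchtGraph, Incident]

@[simp] theorem layerDegree_top_target (h : G) : layerDegree ⊤ (target h) = 0 := by
  simp [layerDegree_eq_ncard, fruchtGraph, Incident]

@[simp] theorem layerDegree_coe_target (t h : G) : layerDegree t (target h) = 1 := by
  have htail (g : G) : t = g⁻¹ * h ↔ g = h * t⁻¹ := by
    rw [eq_inv_mul_iff_mul_eq, eq_mul_inv_iff_mul_eq]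
  simp [layerDegree_eq_ncard, fruchtGraph, Incident, htail]

theorem layerDegree_label_of_le {s x : WithTop G} (h : s ≤ x) :
    layerDegree s (label x) = Nat.card G := by
  simp [layerDegree_eq_ncard, fruchtGraph, Incident, h]

theorem layerDegree_label_of_not_le {s x : WithTop G} (h : ¬s ≤ x) :
    layerDegree s (label x) = 0 := by
  simp [layerDegree_eq_ncard, fruchtGraph, Incident, h]

variable [Finite G] [Nontrivial G]

theorem layerDegree_label_ne_one (s x : WithTop G) : layerDegree s (label x) ≠ 1 := by
  have hcard : 1 < Nat.card G := Finite.one_lt_card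
  by_cases h : s ≤ x
  · rw [layerDegree_label_of_le h]
    exact hcard.ne'
  · rw [layerDegree_label_of_not_le h]
    exact zero_ne_one

theorem exists_eq_source_of_layerDegree {v : FruchtVertex G} (hv : layerDegree ⊤ v = 1) :
    ∃ g, v = source g := by
  cases v with
  | source g => exact ⟨g, rfl⟩
  | label x => exact absurd hv (layerDegree_label_ne_one ⊤ x)
  | _ => simp at hv

theorem exists_eq_target_of_layerDegree {v : FruchtVertex G} {t : G} (ht : layerDegree t v = 1)
    (htop : layerDegree ⊤ v = 0) : ∃ g, v = target g := by
  cases v with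
  | target g => exact ⟨g, rfl⟩
  | label x => exact absurd ht (layerDegree_label_ne_one t x)
  | _ => simp at ht htop

end LayerDegree

theorem eq_label_of_layerDegree [PartialOrder G] [Finite G] [Nontrivial G] {v : FruchtVertex G}
    {x : WithTop G} (hv : ∀ s, layerDegree s v = layerDegree s (label x)) : v = label x := by
  have hcard : 1 < Nat.card G := Finite.one_lt_card
  have hx := hv x
  rw [layerDegree_label_of_le le_rfl] at hx
  cases v with
  | arrow g s =>
    rw [layerDegree_arrow] at hx
    lia
  | source g =>
    rw [layerDegree_source] at hx
    lia
  | target g =>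
    cases x <;> simp only [layerDegree_top_target, layerDegree_coe_target] at hx <;> lia
  | label y =>
    have hxy : x ≤ y := by
      by_contra hnot
      rw [layerDegree_label_of_not_le hnot] at hx
      lia
    have hyx : y ≤ x := by
      by_contra hnot
      have hy := hv y
      rw [layerDegree_label_of_le le_rfl, layerDegree_label_of_not_le hnot] at hy
      lia
    rw [hxy.antisymm hyx]

theorem map_label_top [PartialOrder G] [Finite G] [Nontrivial G]
    (f : fruchtGraph G ≃g fruchtGraph G) : f (label ⊤) = label ⊤ := by
  by_contra hne
  exact (ncard_neighborSet_lt_label_top hne).ne (ncard_neighborSet_apply f _)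

section Automorphisms

variable [LinearOrder G] [Finite G] [Nontrivial G] (f : fruchtGraph G ≃g fruchtGraph G)

theorem exists_map_arrow (g : G) (s : WithTop G) : ∃ h, f (arrow g s) = arrow h s := by
  have hadj : f (arrow g s) ∈ (fruchtGraph G).neighborSet (label ⊤) := by
    rw [← map_label_top f, f.apply_mem_neighborSet_iff, neighborSet_label_top]
    exact ⟨(g, s), rfl⟩
  rw [neighborSet_label_top] at hadj
  obtain ⟨⟨h, t⟩, hf : arrow h t = f (arrow g s)⟩ := hadj
  have hdeg := ncard_neighborSet_apply f (arrow g s)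
  rw [← hf] at hdeg ⊢
  exact ⟨h, by rw [eq_of_ncard_neighborSet_arrow_eq hdeg]⟩

theorem image_layer (s : WithTop G) : f '' layer s = layer s := by
  have hsub (e : fruchtGraph G ≃g fruchtGraph G) : e '' layer s ⊆ layer s := by
    rintro _ ⟨_, ⟨g, rfl⟩, rfl⟩
    obtain ⟨h, hmap⟩ := exists_map_arrow e g s
    exact ⟨h, hmap.symm⟩
  exact (hsub f).antisymm fun v hv ↦ ⟨f.symm v, hsub f.symm ⟨v, hv, rfl⟩, f.apply_symm_apply v⟩

theorem layerDegree_map (s : WithTop G) (v : FruchtVertex G) :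
    layerDegree s (f v) = layerDegree s v := by
  calc layerDegree s (f v)
      = ((fruchtGraph G).neighborSet (f v) ∩ f '' layer s).ncard := by rw [image_layer, layerDegree]
    _ = layerDegree s v := ncard_neighborSet_inter_image f v (layer s)

theorem map_label (x : WithTop G) : f (label x) = label x :=
  eq_label_of_layerDegree fun s ↦ layerDegree_map f s (label x)

theorem exists_map_source (g : G) : ∃ h, f (source g) = source h :=
  exists_eq_source_of_layerDegree ((layerDegree_map f ⊤ _).trans (layerDegree_source ⊤ g))

theorem exists_map_target (g : G) : ∃ h, f (target g) = target h :=
  exists_eq_target_of_layerDegree ((layerDegree_map f (1 : G) _).trans (layerDegree_coe_target 1 g))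
    ((layerDegree_map f ⊤ _).trans (layerDegree_top_target g))

theorem exists_forall_map_eq_smul : ∃ u : G, ∀ v, f v = u • v := by
  choose σ hσ using exists_map_source f
  choose τ hτ using exists_map_target f
  have harrow (g : G) (s : WithTop G) : f (arrow g s) = arrow (σ g) s := by
    obtain ⟨h, hf⟩ := exists_map_arrow f g s
    have hadj : (fruchtGraph G).Adj (arrow g s) (source g) := adj_arrow_source.2 rfl
    rw [← f.map_adj_iff, hf, hσ, adj_arrow_source] at hadj
    rw [hf, hadj]
  have hτσ (g t : G) : τ (g * t) = σ g * t := by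
    have hadj : (fruchtGraph G).Adj (arrow g t) (target (g * t)) := adj_arrow_target.2 (by simp)
    rw [← f.map_adj_iff, harrow, hτ, adj_arrow_target, WithTop.coe_inj] at hadj
    exact (eq_inv_mul_iff_mul_eq.1 hadj).symm
  have hτ_eq (g : G) : τ g = σ 1 * g := by simpa using hτσ 1 g
  have hσ_eq (g : G) : σ g = σ 1 * g := by simpa [hτ_eq] using (hτσ g 1).symm
  refine ⟨σ 1, fun v ↦ ?_⟩
  cases v with
  | arrow g s => rw [harrow, hσ_eq, smul_arrow]
  | source g => rw [hσ, hσ_eq, smul_source]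
  | target g => rw [hτ, hτ_eq, smul_target]
  | label x => rw [map_label, smul_label]

end Automorphisms

theorem range_toPermHom {G : Type} [Group G] [LinearOrder G] [Finite G] [Nontrivial G] :
    (MulAction.toPermHom G (FruchtVertex G)).range = graphAut (fruchtGraph G) := by
  ext f
  constructor
  · rintro ⟨u, rfl⟩
    exact adj_smul_smul_iff u
  · intro hf
    obtain ⟨u, hu⟩ := exists_forall_map_eq_smul (RelIso.mk f (hf _ _))
    exact ⟨u, Equiv.ext fun v ↦ (hu v).symm⟩

end fruchtGraph

/-- **Frucht's theorem, strengthened.** Every finite nontrivial group is the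
automorphism group of a finite triangle-free simple graph with minimum degree
at least 2. -/
theorem frucht_min_degree_two_triangle_free
    (G : Type) [Group G] [Fintype G] [Nontrivial G] :
    ∃ (V : Type) (_ : Fintype V) (𝒢 : SimpleGraph V),
      (∀ v : V, 2 ≤ Set.ncard {w : V | 𝒢.Adj v w}) ∧
      (∀ s : Set V, 𝒢.IsClique s → s.ncard ≤ 2) ∧
      Nonempty (graphAut 𝒢 ≃* G) := by
  obtain ⟨_, -⟩ := exists_wellFoundedLT G
  have e : G ≃* graphAut (fruchtGraph G) :=
    (MonoidHom.ofInjective MulAction.toPerm_injective).trans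
      (MulEquiv.subgroupCongr fruchtGraph.range_toPermHom)
  exact ⟨FruchtVertex G, Fintype.ofFinite _, fruchtGraph G, fruchtGraph.two_le_ncard_neighborSet,
    fun _ ↦ ncard_le_of_isClique_of_colorable fruchtGraph.colorable_two, ⟨e.symm⟩⟩
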